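/- arXiv:2110.00390 — 2 statements merged into one kernel-verified Lean document; each statement's English description precedes it below -/
import Mathlib

section
/- Let (λ_j)_{j=1}^∞ and (a_j)_{j=1}^∞ be sequences of real numbers such that |λ₁| > 0 and |λ_j| ≤ |λ_{j+1}| for all j, and suppose there exist constants c₁, c₂, c₃, c₄ > 0 such that |λ_j| ≥ c₁ j^{c₂} and |a_j| ≤ c₃ j^{c₄} for all j. Then for every a' > 0, the function s ↦ Σ_{j=1}^∞ sgn(λ_j) a_j · e^{−λ_j² s} e^{−a'²/s} s^{−1/2} · ( a'/s − |λ_j| ) is integrable on (0,∞), and ∫_0^∞ Σ_{j=1}^∞ sgn(λ_j) a_j · e^{−λ_j² s} e^{−a'²/s} s^{−1/2} · ( a'/s − |λ_j| ) ds = 0. -/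
open MeasureTheory Set

/-! Put `φ(s) = L √s - a / √s`, so that `L² s + a² / s = φ(s)² + 2aL` and
`φ'(s) = (a / s + L) / (2 √s)`. With `L = |λ_j|`, the `j`-th term is bounded in absolute value by
`2 |a_j| exp (-2aL) φ'(s) exp (-φ(s)²)`, whose integral over `(0, ∞)` is at most
`2 √π |a_j| exp (-2aL)`. The involution `s ↦ (a / L)² / s` exchanges `L² s` and `a² / s` and, the
Jacobian included, changes the sign of the term, which therefore integrates to zero. Since
`∑ |a_j| exp (-2a|λ_j|)` converges, the series converges in `L¹` and may be integrated term by
term. -/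

section Integration

theorem integrable_tsum_of_summable_integral_norm {ι α E : Type*} [Countable ι]
    [MeasurableSpace α] {μ : Measure α} [NormedAddCommGroup E] [CompleteSpace E] {F : ι → α → E}
    (hF : ∀ i, Integrable (F i) μ) (hsum : Summable fun i => ∫ x, ‖F i x‖ ∂μ) :
    Integrable (fun x => ∑' i, F i x) μ := by
  have hnorm : ∑' i, ‖(hF i).toL1 (F i)‖ₑ ≠ ⊤ := by
    simpa only [tsum_enorm_ne_top_iff_summable_norm, L1.norm_of_fun_eq_integral_norm] using hsum
  refine (L1.integrable_coeFn (∑' i, (hF i).toL1 (F i))).congr ?_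
  filter_upwards [Lp.hasSum_coeFn_tsum hnorm, ae_all_iff.2 fun i => (hF i).coeFn_toL1]
    with x hasSum_x toL1_x
  simpa only [toL1_x] using hasSum_x.tsum_eq.symm

theorem setIntegral_abs_deriv_mul_comp_le {f f' g : ℝ → ℝ} {s : Set ℝ} (hs : MeasurableSet s)
    (hf' : ∀ x ∈ s, HasDerivWithinAt f (f' x) s x) (hf : InjOn f s) (hg : Integrable g)
    (hg0 : 0 ≤ g) : ∫ x in s, |f' x| * g (f x) ≤ ∫ y, g y := by
  simp only [← smul_eq_mul]
  rw [← integral_image_eq_integral_abs_deriv_smul hs hf' hf]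
  exact setIntegral_le_integral hg (.of_forall hg0)

theorem integral_Ioi_comp_const_div {E : Type*} [NormedAddCommGroup E] [NormedSpace ℝ E]
    (g : ℝ → E) {c : ℝ} (hc : 0 < c) :
    ∫ s in Ioi 0, (c / s ^ 2) • g (c / s) = ∫ s in Ioi 0, g s := by
  have himage : (fun s => c / s) '' Ioi 0 = Ioi 0 := by
    refine Subset.antisymm (image_subset_iff.2 fun s hs => div_pos hc hs) fun s hs => ?_
    exact ⟨c / s, div_pos hc hs, div_div_cancel₀ hc.ne'⟩
  have hderiv : ∀ s ∈ Ioi (0 : ℝ), HasDerivWithinAt (fun s => c / s) (-(c / s ^ 2)) (Ioi 0) s :=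
    fun s hs => by
      simpa [div_eq_mul_inv] using ((hasDerivAt_inv (ne_of_gt hs)).const_mul c).hasDerivWithinAt
  have hinj : InjOn (fun s => c / s) (Ioi 0) := fun s _ t _ hst => by
    simpa only [div_eq_mul_inv, mul_right_inj' hc.ne', inv_inj] using hst
  have hchange := integral_image_eq_integral_abs_deriv_smul measurableSet_Ioi hderiv hinj g
  rw [himage] at hchange
  simpa only [abs_neg, abs_of_nonneg (div_nonneg hc.le (sq_nonneg _))] using hchange.symm

end Integration

section Schlomilch

/-- The Cauchy–Schlömilch substitution `s ↦ L √s - a / √s`, which turns the exponential factors of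
the boundary kernel into a Gaussian. -/
noncomputable def schlomilchMap (a L s : ℝ) : ℝ := L * √s - a / √s

variable {a L s : ℝ}

theorem hasDerivAt_schlomilchMap (hs : 0 < s) :
    HasDerivAt (schlomilchMap a L) ((a / s + L) / (2 * √s)) s := by
  have hr : √s ≠ 0 := (Real.sqrt_pos.2 hs).ne'
  have hsqrt := Real.hasDerivAt_sqrt hs.ne'
  refine ((hsqrt.const_mul L).sub ((hasDerivAt_const s a).div hsqrt hr)).congr_deriv ?_
  rw [Real.sq_sqrt hs.le]
  field_simp
  ring

theorem strictMonoOn_schlomilchMap (ha : 0 < a) (hL : 0 ≤ L) :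
    StrictMonoOn (schlomilchMap a L) (Ioi 0) := by
  intro s hs t _ hst
  have hsqrt : √s < √t := Real.sqrt_lt_sqrt (le_of_lt hs) hst
  have hmul : L * √s ≤ L * √t := mul_le_mul_of_nonneg_left hsqrt.le hL
  have hdiv : a / √t < a / √s := div_lt_div_of_pos_left ha (Real.sqrt_pos.2 hs) hsqrt
  unfold schlomilchMap
  linarith

theorem schlomilchMap_sq (hs : 0 < s) :
    schlomilchMap a L s ^ 2 = L ^ 2 * s + a ^ 2 / s - 2 * a * L := by
  have hr : √s ≠ 0 := (Real.sqrt_pos.2 hs).ne'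
  rw [schlomilchMap, sub_sq, mul_pow, div_pow, Real.sq_sqrt hs.le]
  field_simp
  ring

theorem exp_mul_exp_eq_exp_neg_schlomilchMap_sq (hs : 0 < s) :
    Real.exp (-L ^ 2 * s) * Real.exp (-a ^ 2 / s) =
      Real.exp (-(2 * a) * L) * Real.exp (-1 * schlomilchMap a L s ^ 2) := by
  rw [← Real.exp_add, ← Real.exp_add, schlomilchMap_sq hs]
  ring_nf

theorem schlomilchMap_div (ha : 0 < a) (hL : 0 < L) (hs : 0 < s) :
    schlomilchMap a L ((a / L) ^ 2 / s) = -schlomilchMap a L s := by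
  have hr : √s ≠ 0 := (Real.sqrt_pos.2 hs).ne'
  rw [schlomilchMap, schlomilchMap, Real.sqrt_div (sq_nonneg _), Real.sqrt_sq (div_pos ha hL).le]
  field_simp
  ring

end Schlomilch

section BoundaryKernel

/-- The boundary kernel: the `s`-dependent factor of the `j`-th summand, where `L` is `|λ_j|`;
the factor `sgn(λ_j) a_j` is kept apart as the coefficient of the kernel in the series. -/
noncomputable def boundaryKernel (a L s : ℝ) : ℝ :=
  Real.exp (-L ^ 2 * s) * Real.exp (-a ^ 2 / s) / √s * (a / s - L)

variable {a L s : ℝ}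

theorem abs_boundaryKernel_le (ha : 0 ≤ a) (hL : 0 ≤ L) (hs : 0 < s) :
    |boundaryKernel a L s| ≤ 2 * Real.exp (-(2 * a) * L) *
      (|(a / s + L) / (2 * √s)| * Real.exp (-1 * schlomilchMap a L s ^ 2)) := by
  have hsub : |a / s - L| ≤ a / s + L :=
    abs_sub_le_iff.2 ⟨by linarith, by linarith [div_nonneg ha hs.le]⟩
  have hderiv : 0 ≤ (a / s + L) / (2 * √s) := by positivity
  rw [boundaryKernel, exp_mul_exp_eq_exp_neg_schlomilchMap_sq hs, abs_mul, abs_of_nonneg hderiv,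
    abs_of_nonneg (by positivity)]
  calc _ ≤ Real.exp (-(2 * a) * L) * Real.exp (-1 * schlomilchMap a L s ^ 2) / √s *
          (a / s + L) := mul_le_mul_of_nonneg_left hsub (by positivity)
    _ = _ := by ring

theorem integrableOn_boundaryKernel_majorant (ha : 0 < a) (hL : 0 ≤ L) :
    IntegrableOn (fun s => |(a / s + L) / (2 * √s)| * Real.exp (-1 * schlomilchMap a L s ^ 2))
      (Ioi 0) :=
  (integrableOn_image_iff_integrableOn_abs_deriv_smul measurableSet_Ioi
    (fun _ hs => (hasDerivAt_schlomilchMap hs).hasDerivWithinAt)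
    (strictMonoOn_schlomilchMap ha hL).injOn _).1
    (integrable_exp_neg_mul_sq one_pos).integrableOn

theorem integrableOn_boundaryKernel (ha : 0 < a) (hL : 0 ≤ L) :
    IntegrableOn (boundaryKernel a L) (Ioi 0) := by
  have hmajorant :=
    (integrableOn_boundaryKernel_majorant ha hL).const_mul (2 * Real.exp (-(2 * a) * L))
  refine hmajorant.mono' (by unfold boundaryKernel; fun_prop) ?_
  filter_upwards [ae_restrict_mem measurableSet_Ioi] with s hs
  exact abs_boundaryKernel_le ha.le hL hs

theorem integral_norm_boundaryKernel_le (ha : 0 < a) (hL : 0 ≤ L) :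
    ∫ s in Ioi 0, ‖boundaryKernel a L s‖ ≤ 2 * √Real.pi * Real.exp (-(2 * a) * L) := by
  have hgauss : ∫ s in Ioi 0,
      |(a / s + L) / (2 * √s)| * Real.exp (-1 * schlomilchMap a L s ^ 2) ≤ √Real.pi := by
    simpa only [integral_gaussian, div_one] using setIntegral_abs_deriv_mul_comp_le
      measurableSet_Ioi (fun _ hs => (hasDerivAt_schlomilchMap hs).hasDerivWithinAt)
      (strictMonoOn_schlomilchMap ha hL).injOn (integrable_exp_neg_mul_sq one_pos)
      fun _ => (Real.exp_pos _).le
  calc ∫ s in Ioi 0, ‖boundaryKernel a L s‖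
      ≤ ∫ s in Ioi 0, 2 * Real.exp (-(2 * a) * L) *
          (|(a / s + L) / (2 * √s)| * Real.exp (-1 * schlomilchMap a L s ^ 2)) :=
        setIntegral_mono_on (integrableOn_boundaryKernel ha hL).norm
          ((integrableOn_boundaryKernel_majorant ha hL).const_mul _) measurableSet_Ioi
          fun _ hs => abs_boundaryKernel_le ha.le hL hs
    _ ≤ 2 * Real.exp (-(2 * a) * L) * √Real.pi := by
        rw [integral_const_mul]
        gcongr
    _ = 2 * √Real.pi * Real.exp (-(2 * a) * L) := mul_right_comm _ _ _

theorem boundaryKernel_div (ha : 0 < a) (hL : 0 < L) (hs : 0 < s) :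
    (a / L) ^ 2 / s ^ 2 * boundaryKernel a L ((a / L) ^ 2 / s) = -boundaryKernel a L s := by
  have hc : 0 < (a / L) ^ 2 / s := by positivity
  rw [boundaryKernel, boundaryKernel, exp_mul_exp_eq_exp_neg_schlomilchMap_sq hc,
    exp_mul_exp_eq_exp_neg_schlomilchMap_sq hs, schlomilchMap_div ha hL hs, neg_sq,
    Real.sqrt_div (sq_nonneg _), Real.sqrt_sq (div_pos ha hL).le]
  have hr : √s ≠ 0 := (Real.sqrt_pos.2 hs).ne'
  field_simp
  rw [Real.sq_sqrt hs.le]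
  ring

theorem integral_boundaryKernel_eq_zero (ha : 0 < a) (hL : 0 < L) :
    ∫ s in Ioi 0, boundaryKernel a L s = 0 := by
  refine self_eq_neg.1 ?_
  calc ∫ s in Ioi 0, boundaryKernel a L s
      = ∫ s in Ioi 0, ((a / L) ^ 2 / s ^ 2) • boundaryKernel a L ((a / L) ^ 2 / s) :=
        (integral_Ioi_comp_const_div _ (pow_pos (div_pos ha hL) 2)).symm
    _ = ∫ s in Ioi 0, -boundaryKernel a L s :=
        setIntegral_congr_fun measurableSet_Ioi fun _ hs => boundaryKernel_div ha hL hs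
    _ = -∫ s in Ioi 0, boundaryKernel a L s := integral_neg _

end BoundaryKernel

section Summability

open Filter Asymptotics

theorem summable_rpow_mul_exp_neg_mul_rpow {k p : ℝ} (hk : 0 < k) (hp : 0 < p) (q : ℝ) :
    Summable fun n : ℕ => (n : ℝ) ^ q * Real.exp (-k * (n : ℝ) ^ p) := by
  refine summable_of_isBigO_nat (Real.summable_nat_rpow.2 (by norm_num : (-2 : ℝ) < -1)) ?_
  have htop : Tendsto (fun n : ℕ => (n : ℝ) ^ p) atTop atTop :=
    (tendsto_rpow_atTop hp).comp tendsto_natCast_atTop_atTop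
  have hexp : (fun n : ℕ => Real.exp (-k * (n : ℝ) ^ p)) =O[atTop]
      fun n : ℕ => ((n : ℝ) ^ p) ^ ((-2 - q) / p) :=
    ((isLittleO_exp_neg_mul_rpow_atTop hk _).comp_tendsto htop).isBigO
  refine ((isBigO_refl (fun n : ℕ => (n : ℝ) ^ q) atTop).mul hexp).congr' .rfl ?_
  filter_upwards [eventually_gt_atTop 0] with n hn
  have hn' : (0 : ℝ) < n := Nat.cast_pos.2 hn
  rw [← Real.rpow_mul hn'.le, mul_div_cancel₀ _ hp.ne', ← Real.rpow_add hn', add_sub_cancel]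

theorem summable_norm_mul_exp_neg_of_rpow_bounds {E : Type*} [SeminormedAddCommGroup E]
    {b : ℕ → E} {L : ℕ → ℝ} {k c₁ c₂ c₃ c₄ : ℝ} (hk : 0 < k) (hc₁ : 0 < c₁) (hc₂ : 0 < c₂)
    (hL : ∀ j : ℕ, c₁ * ((j : ℝ) + 1) ^ c₂ ≤ L j) (hb : ∀ j : ℕ, ‖b j‖ ≤ c₃ * ((j : ℝ) + 1) ^ c₄) :
    Summable fun j => ‖b j‖ * Real.exp (-k * L j) := by
  have hshift := (summable_nat_add_iff 1).2
    (summable_rpow_mul_exp_neg_mul_rpow (mul_pos hk hc₁) hc₂ c₄)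
  push_cast at hshift
  refine (hshift.mul_left c₃).of_nonneg_of_le (fun j => by positivity) fun j => ?_
  have hexp : Real.exp (-k * L j) ≤ Real.exp (-(k * c₁) * ((j : ℝ) + 1) ^ c₂) :=
    Real.exp_le_exp.2 (by linarith [mul_le_mul_of_nonneg_left (hL j) hk.le])
  rw [← mul_assoc]
  exact mul_le_mul (hb j) hexp (Real.exp_pos _).le ((norm_nonneg _).trans (hb j))

end Summability

section BoundarySeries

variable {ι E : Type*} [NormedAddCommGroup E] [NormedSpace ℝ E] {L : ι → ℝ} {b : ι → E} {a : ℝ}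

theorem summable_integral_norm_boundaryKernel_smul (ha : 0 < a) (hL : ∀ j, 0 ≤ L j)
    (hsum : Summable fun j => ‖b j‖ * Real.exp (-(2 * a) * L j)) :
    Summable fun j => ∫ s in Ioi 0, ‖boundaryKernel a (L j) s • b j‖ := by
  refine (hsum.mul_left (2 * √Real.pi)).of_nonneg_of_le
    (fun j => integral_nonneg fun s => norm_nonneg _) fun j => ?_
  simp only [norm_smul, integral_mul_const]
  calc (∫ s in Ioi 0, ‖boundaryKernel a (L j) s‖) * ‖b j‖
      ≤ 2 * √Real.pi * Real.exp (-(2 * a) * L j) * ‖b j‖ := by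
        gcongr
        exact integral_norm_boundaryKernel_le ha (hL j)
    _ = 2 * √Real.pi * (‖b j‖ * Real.exp (-(2 * a) * L j)) := by ring

theorem integrableOn_tsum_boundaryKernel_smul [Countable ι] [CompleteSpace E] (ha : 0 < a)
    (hL : ∀ j, 0 ≤ L j) (hsum : Summable fun j => ‖b j‖ * Real.exp (-(2 * a) * L j)) :
    IntegrableOn (fun s => ∑' j, boundaryKernel a (L j) s • b j) (Ioi 0) :=
  integrable_tsum_of_summable_integral_norm
    (fun j => (integrableOn_boundaryKernel ha (hL j)).smul_const (b j))
    (summable_integral_norm_boundaryKernel_smul ha hL hsum)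

theorem integral_tsum_boundaryKernel_smul_eq_zero [Countable ι] [CompleteSpace E] (ha : 0 < a)
    (hL : ∀ j, 0 < L j) (hsum : Summable fun j => ‖b j‖ * Real.exp (-(2 * a) * L j)) :
    ∫ s in Ioi 0, ∑' j, boundaryKernel a (L j) s • b j = 0 := by
  rw [← integral_tsum_of_summable_integral_norm
    (fun j => (integrableOn_boundaryKernel ha (hL j).le).smul_const (b j))
    (summable_integral_norm_boundaryKernel_smul ha (fun j => (hL j).le) hsum)]
  simp only [integral_smul_const, integral_boundaryKernel_eq_zero ha (hL _), zero_smul, tsum_zero]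

end BoundarySeries

theorem stmt4_general {ι E : Type*} [Countable ι] [NormedAddCommGroup E] [NormedSpace ℝ E]
    [CompleteSpace E] {lam : ι → ℝ} {A : ι → E} {a' : ℝ} (ha' : 0 < a') (hlam : ∀ j, lam j ≠ 0)
    (hsum : Summable fun j => ‖A j‖ * Real.exp (-(2 * a') * |lam j|)) :
    IntegrableOn
      (fun s : ℝ => ∑' j, (Real.sign (lam j) *
        (Real.exp (-(lam j) ^ 2 * s) * Real.exp (-a' ^ 2 / s) / √s) *
        (a' / s - |lam j|)) • A j) (Ioi 0) ∧
    ∫ s in Ioi (0 : ℝ), ∑' j, (Real.sign (lam j) *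
        (Real.exp (-(lam j) ^ 2 * s) * Real.exp (-a' ^ 2 / s) / √s) *
        (a' / s - |lam j|)) • A j = 0 := by
  have hterm (s : ℝ) (j : ι) : (Real.sign (lam j) *
      (Real.exp (-(lam j) ^ 2 * s) * Real.exp (-a' ^ 2 / s) / √s) * (a' / s - |lam j|)) • A j =
      boundaryKernel a' |lam j| s • Real.sign (lam j) • A j := by
    rw [boundaryKernel, sq_abs, smul_smul, mul_assoc, mul_comm (Real.sign _)]
  have hnorm (j : ι) : ‖Real.sign (lam j) • A j‖ = ‖A j‖ := by
    rcases Real.sign_apply_eq_of_ne_zero _ (hlam j) with h | h <;> simp [h]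
  have hpos (j : ι) : 0 < |lam j| := abs_pos.2 (hlam j)
  simp only [← hnorm] at hsum
  simp only [hterm]
  exact ⟨integrableOn_tsum_boundaryKernel_smul ha' (fun j => (hpos j).le) hsum,
    integral_tsum_boundaryKernel_smul_eq_zero ha' hpos hsum⟩

/-- vanishing of the boundary-term integral (Proposition 5.1 of [HW21a]).
The sequences are indexed so that `lam j`, `A j` correspond to `λ_{j+1}`, `a_{j+1}`. -/
theorem stmt4 (lam A : ℕ → ℝ)
    (h0 : 0 < |lam 0|)
    (hmono : ∀ j, |lam j| ≤ |lam (j + 1)|)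
    (c₁ c₂ c₃ c₄ : ℝ) (hc₁ : 0 < c₁) (hc₂ : 0 < c₂) (hc₃ : 0 < c₃) (hc₄ : 0 < c₄)
    (hgrowth : ∀ j : ℕ, c₁ * ((j : ℝ) + 1) ^ c₂ ≤ |lam j|)
    (hbound : ∀ j : ℕ, |A j| ≤ c₃ * ((j : ℝ) + 1) ^ c₄)
    (a' : ℝ) (ha' : 0 < a') :
    IntegrableOn
      (fun s : ℝ => ∑' j : ℕ, Real.sign (lam j) * A j *
        (Real.exp (-(lam j) ^ 2 * s) * Real.exp (-a' ^ 2 / s) / Real.sqrt s) *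
        (a' / s - |lam j|)) (Ioi 0) volume ∧
    ∫ s in Ioi (0:ℝ), ∑' j : ℕ, Real.sign (lam j) * A j *
        (Real.exp (-(lam j) ^ 2 * s) * Real.exp (-a' ^ 2 / s) / Real.sqrt s) *
        (a' / s - |lam j|) = 0 := by
  have hlam (j : ℕ) : lam j ≠ 0 := abs_pos.1 ((mul_pos hc₁ (by positivity)).trans_le (hgrowth j))
  have hsum : Summable fun j => ‖A j‖ * Real.exp (-(2 * a') * |lam j|) :=
    summable_norm_mul_exp_neg_of_rpow_bounds (mul_pos two_pos ha') hc₁ hc₂ hgrowth hbound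
  simpa only [smul_eq_mul, mul_right_comm _ _ (A _)] using stmt4_general ha' hlam hsum
end

section
/- For all s > 0, all a > 0, and all λ ∈ ℝ, one has 4 ∫_0^∞ e^{−s(μ² + λ²)} sin(μa) ( μ cos(μa) + |λ| sin(μa) ) dμ = √π · e^{−sλ²} · ( a s^{−3/2} e^{−a²/s} + |λ| s^{−1/2} (1 − e^{−a²/s}) ). -/
open MeasureTheory Set

/-! The integrand is even in `μ`, so the half-line integral is half of an integral over `ℝ`. There
the double-angle formulas turn it into the Gaussian cosine transform
`∫ exp (-s x²) cos (t x) = √(π / s) exp (-t² / (4 s))` and the sine transform of `x exp (-s x²)`,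
at frequency `t = 2 a`. Integrating the derivative of `exp (-s x²) sin (t x)` over `ℝ` gives `0`,
which expresses the sine transform through the cosine transform. -/

section

open Real

lemma two_mul_integral_Ioi_of_even {f : ℝ → ℝ} (hf : f.Even) :
    2 * ∫ x in Ioi 0, f x = ∫ x, f x := by
  rw [← integral_comp_abs]
  refine integral_congr_ae (.of_forall fun x => ?_)
  rcases abs_choice x with h | h
  · simp only [h]
  · simp only [h, hf x]

section Integrability

variable {α : Type*} [MeasurableSpace α] {μ : Measure α} {f g : α → ℝ}

lemma integrable_mul_cos (hf : Integrable f μ) (hg : AEMeasurable g μ) :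
    Integrable (fun x => f x * cos (g x)) μ :=
  hf.mul_bdd (c := 1) (measurable_cos.comp_aemeasurable hg).aestronglyMeasurable
    (.of_forall fun x => abs_cos_le_one (g x))

lemma integrable_mul_sin (hf : Integrable f μ) (hg : AEMeasurable g μ) :
    Integrable (fun x => f x * sin (g x)) μ :=
  hf.mul_bdd (c := 1) (measurable_sin.comp_aemeasurable hg).aestronglyMeasurable
    (.of_forall fun x => abs_sin_le_one (g x))

end Integrability

lemma hasDerivAt_exp_neg_mul_sq_mul_sin (s t x : ℝ) :
    HasDerivAt (fun x => exp (-s * x ^ 2) * sin (t * x))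
      (t * (exp (-s * x ^ 2) * cos (t * x)) - 2 * s * (x * exp (-s * x ^ 2) * sin (t * x))) x := by
  have hexp : HasDerivAt (fun x => exp (-s * x ^ 2)) (exp (-s * x ^ 2) * (-s * (2 * x))) x := by
    simpa using ((hasDerivAt_pow 2 x).const_mul (-s)).exp
  have hsin : HasDerivAt (fun x => sin (t * x)) (cos (t * x) * t) x := by
    simpa using ((hasDerivAt_id x).const_mul t).sin
  exact (hexp.mul hsin).congr_deriv (by ring)

lemma even_exp_neg_mul_sq_mul_sin_mul_add (s a c : ℝ) : Function.Even fun x : ℝ =>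
    exp (-s * x ^ 2) * sin (x * a) * (x * cos (x * a) + c * sin (x * a)) := by
  intro x
  simp only [neg_sq, neg_mul, sin_neg, cos_neg]
  ring

section GaussianTransform

variable {s : ℝ} (hs : 0 < s) (t a : ℝ)

include hs

lemma integrable_exp_neg_mul_sq_mul_cos : Integrable fun x => exp (-s * x ^ 2) * cos (t * x) :=
  integrable_mul_cos (integrable_exp_neg_mul_sq hs) (by fun_prop)

lemma integrable_mul_exp_neg_mul_sq_mul_sin :
    Integrable fun x => x * exp (-s * x ^ 2) * sin (t * x) :=
  integrable_mul_sin (integrable_mul_exp_neg_mul_sq hs) (by fun_prop)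

lemma integral_exp_neg_mul_sq_mul_cos :
    ∫ x, exp (-s * x ^ 2) * cos (t * x) = √(π / s) * exp (-t ^ 2 / (4 * s)) := by
  let F : ℝ → ℂ := fun x => Complex.exp (Complex.I * t * x) * Complex.exp (-s * x ^ 2)
  have hF_re (x : ℝ) : (F x).re = exp (-s * x ^ 2) * cos (t * x) := by
    have hphase : Complex.I * t * x = (t * x : ℝ) * Complex.I := by push_cast; ring
    have hgauss : Complex.exp (-s * x ^ 2) = (exp (-s * x ^ 2) : ℝ) := by push_cast; rfl
    simp only [F, hphase, hgauss, Complex.re_mul_ofReal, Complex.exp_ofReal_mul_I_re]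
    ring
  have hF_int : Integrable F := by
    refine (integrable_cexp_quadratic (b := s) hs (Complex.I * t) 0).congr (.of_forall fun x => ?_)
    simp only [F, ← Complex.exp_add]
    ring_nf
  have hF : ∫ x, F x = (√(π / s) * exp (-t ^ 2 / (4 * s)) : ℝ) := by
    rw [fourierIntegral_gaussian (b := s) hs t, sqrt_eq_rpow, Complex.ofReal_mul,
      Complex.ofReal_cpow (by positivity)]
    push_cast
    rfl
  calc ∫ x, exp (-s * x ^ 2) * cos (t * x)
      = ∫ x, (F x).re := by simp only [hF_re]
    _ = (∫ x, F x).re := integral_re hF_int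
    _ = √(π / s) * exp (-t ^ 2 / (4 * s)) := by rw [hF, Complex.ofReal_re]

lemma integral_mul_exp_neg_mul_sq_mul_sin :
    ∫ x, x * exp (-s * x ^ 2) * sin (t * x) =
      t / (2 * s) * (√(π / s) * exp (-t ^ 2 / (4 * s))) := by
  have hcos := (integrable_exp_neg_mul_sq_mul_cos hs t).const_mul t
  have hsin := (integrable_mul_exp_neg_mul_sq_mul_sin hs t).const_mul (2 * s)
  have hparts : t * (∫ x, exp (-s * x ^ 2) * cos (t * x)) -
      2 * s * ∫ x, x * exp (-s * x ^ 2) * sin (t * x) = 0 := by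
    rw [← integral_const_mul, ← integral_const_mul, ← integral_sub hcos hsin]
    exact integral_eq_zero_of_hasDerivAt_of_integrable (hasDerivAt_exp_neg_mul_sq_mul_sin s t)
      (hcos.sub hsin) (integrable_mul_sin (integrable_exp_neg_mul_sq hs) (by fun_prop))
  rw [integral_exp_neg_mul_sq_mul_cos hs] at hparts
  rw [div_mul_eq_mul_div, eq_div_iff (by positivity)]
  linarith

lemma integral_exp_neg_mul_sq_mul_sin_sq :
    ∫ x, exp (-s * x ^ 2) * sin (x * a) ^ 2 = √(π / s) / 2 * (1 - exp (-a ^ 2 / s)) := by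
  have hdouble (x : ℝ) : exp (-s * x ^ 2) * sin (x * a) ^ 2 =
      (exp (-s * x ^ 2) - exp (-s * x ^ 2) * cos (2 * a * x)) / 2 := by
    rw [sin_sq_eq_half_sub, show 2 * (x * a) = 2 * a * x by ring]
    ring
  simp only [hdouble]
  rw [integral_div, integral_sub (integrable_exp_neg_mul_sq hs)
      (integrable_exp_neg_mul_sq_mul_cos hs _), integral_gaussian,
    integral_exp_neg_mul_sq_mul_cos hs, show -(2 * a) ^ 2 / (4 * s) = -a ^ 2 / s by ring]
  ring

lemma integral_mul_exp_neg_mul_sq_mul_sin_mul_cos :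
    ∫ x, x * exp (-s * x ^ 2) * (sin (x * a) * cos (x * a)) =
      a / (2 * s) * (√(π / s) * exp (-a ^ 2 / s)) := by
  have hdouble (x : ℝ) : x * exp (-s * x ^ 2) * (sin (x * a) * cos (x * a)) =
      x * exp (-s * x ^ 2) * sin (2 * a * x) / 2 := by
    rw [show 2 * a * x = 2 * (x * a) by ring, sin_two_mul]
    ring
  simp only [hdouble]
  rw [integral_div, integral_mul_exp_neg_mul_sq_mul_sin hs,
    show -(2 * a) ^ 2 / (4 * s) = -a ^ 2 / s by ring]
  ring

lemma integral_exp_neg_mul_sq_mul_sin_mul_add (c : ℝ) :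
    ∫ x, exp (-s * x ^ 2) * sin (x * a) * (x * cos (x * a) + c * sin (x * a)) =
      √(π / s) / 2 * (a / s * exp (-a ^ 2 / s) + c * (1 - exp (-a ^ 2 / s))) := by
  have hsplit (x : ℝ) :
      exp (-s * x ^ 2) * sin (x * a) * (x * cos (x * a) + c * sin (x * a)) =
        x * exp (-s * x ^ 2) * (sin (x * a) * cos (x * a)) +
          c * (exp (-s * x ^ 2) * sin (x * a) ^ 2) := by ring
  have hsin_cos : Integrable fun x => x * exp (-s * x ^ 2) * (sin (x * a) * cos (x * a)) := by
    simpa only [mul_assoc] using integrable_mul_cos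
      (integrable_mul_sin (integrable_mul_exp_neg_mul_sq hs) (g := (· * a)) (by fun_prop))
      (g := (· * a)) (by fun_prop)
  have hsin_sq : Integrable fun x => exp (-s * x ^ 2) * sin (x * a) ^ 2 := by
    simpa only [mul_assoc, ← sq] using integrable_mul_sin
      (integrable_mul_sin (integrable_exp_neg_mul_sq hs) (g := (· * a)) (by fun_prop))
      (g := (· * a)) (by fun_prop)
  simp only [hsplit]
  rw [integral_add hsin_cos (hsin_sq.const_mul c), integral_const_mul,
    integral_mul_exp_neg_mul_sq_mul_sin_mul_cos hs, integral_exp_neg_mul_sq_mul_sin_sq hs]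
  ring

end GaussianTransform

theorem stmt9_general {s : ℝ} (hs : 0 < s) (a lam c : ℝ) :
    4 * ∫ μ in Ioi 0, exp (-s * (μ ^ 2 + lam ^ 2)) * sin (μ * a) *
        (μ * cos (μ * a) + c * sin (μ * a)) =
      √π * exp (-s * lam ^ 2) *
        (a * s ^ (-(3 : ℝ) / 2) * exp (-a ^ 2 / s) +
          c * s ^ (-(1 : ℝ) / 2) * (1 - exp (-a ^ 2 / s))) := by
  have hfactor (μ : ℝ) : exp (-s * (μ ^ 2 + lam ^ 2)) * sin (μ * a) *
      (μ * cos (μ * a) + c * sin (μ * a)) = exp (-s * lam ^ 2) *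
        (exp (-s * μ ^ 2) * sin (μ * a) * (μ * cos (μ * a) + c * sin (μ * a))) := by
    rw [mul_add (-s), exp_add]
    ring
  have hhalf := two_mul_integral_Ioi_of_even (even_exp_neg_mul_sq_mul_sin_mul_add s a c)
  rw [integral_exp_neg_mul_sq_mul_sin_mul_add hs] at hhalf
  have hsqrt : √(π / s) = √π * s ^ (-(1 : ℝ) / 2) := by
    rw [sqrt_div' _ hs.le, neg_div, rpow_neg hs.le, ← sqrt_eq_rpow, div_eq_mul_inv]
  have hrpow : s ^ (-(3 : ℝ) / 2) = s ^ (-(1 : ℝ) / 2) / s := by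
    rw [← rpow_sub_one hs.ne']
    norm_num
  rw [hsqrt] at hhalf
  simp only [hfactor]
  rw [integral_const_mul, hrpow]
  linear_combination 2 * exp (-s * lam ^ 2) * hhalf

end

/-- for `s > 0`, `a > 0`, `λ ∈ ℝ`,
`4 ∫_0^∞ e^{−s(μ²+λ²)} sin(μa) (μ cos(μa) + |λ| sin(μa)) dμ
  = √π e^{−sλ²} (a s^{−3/2} e^{−a²/s} + |λ| s^{−1/2} (1 − e^{−a²/s}))`. -/
theorem stmt9 (s : ℝ) (hs : 0 < s) (a : ℝ) (ha : 0 < a) (lam : ℝ) :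
    4 * ∫ μ in Ioi (0:ℝ), Real.exp (-s * (μ ^ 2 + lam ^ 2)) * Real.sin (μ * a) *
        (μ * Real.cos (μ * a) + |lam| * Real.sin (μ * a)) =
      Real.sqrt Real.pi * Real.exp (-s * lam ^ 2) *
        (a * s ^ (-(3:ℝ) / 2) * Real.exp (-a ^ 2 / s) +
          |lam| * s ^ (-(1:ℝ) / 2) * (1 - Real.exp (-a ^ 2 / s))) :=
  stmt9_general hs a lam |lam|
end
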